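/- For integers a_0, …, a_15, if e_0 + e_4 ≢ e_2 + e_6 (mod 2) and e_1 + e_5 ≢ e_3 + e_7 (mod 2), then Re(α_1) ≡ (−1)^{b_2} + 2(b_0 b_2 + b_1 b_3 + c_0 c_2 + c_1 c_3) (mod 8) and Im(α_1) ≡ (−1)^{b_1} + 2(b_0 b_2 + b_1 b_3 + c_0 c_2 + c_1 c_3) (mod 8). -/

import Mathlib

open Complex Finset

noncomputable def zeta16 : ℂ := Complex.exp (2 * Real.pi * Complex.I / 16)

noncomputable def fpoly (a : Fin 16 → ℤ) (x : ℂ) : ℂ := ∑ k : Fin 16, (a k : ℂ) * x ^ (k : ℕ)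

noncomputable def Nprod (a : Fin 16 → ℤ) (d : ℕ) : ℂ :=
  ∏ l ∈ Finset.filter (fun l => Nat.gcd l 16 = d) (Finset.range 16), fpoly a (zeta16 ^ l)

def circMatrix (a : Fin 16 → ℤ) : Matrix (Fin 16) (Fin 16) ℤ := fun i j => a (i - j)

def S16 : Set ℤ := { n | ∃ a : Fin 16 → ℤ, n = (circMatrix a).det }

def bcoef (a : Fin 16 → ℤ) (k : Fin 16) : ℤ := (a k + a (k + 8)) + (a (k + 4) + a (k + 12))
def ccoef (a : Fin 16 → ℤ) (k : Fin 16) : ℤ := (a k + a (k + 8)) - (a (k + 4) + a (k + 12))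
def ecoef (a : Fin 16 → ℤ) (k : Fin 16) : ℤ := a k - a (k + 8)

lemma zeta16_pow_four : zeta16 ^ 4 = I := by
  unfold zeta16
  rw [← Complex.exp_nat_mul]
  refine Eq.trans (congrArg Complex.exp ?_) Complex.exp_pi_div_two_mul_I
  push_cast
  ring

lemma fpoly_of_pow_four (a : Fin 16 → ℤ) (z : ℂ) (hz : z ^ 4 = I) :
    fpoly a z = ((ecoef a 0 : ℂ) + I * ecoef a 4) + (ecoef a 1 + I * ecoef a 5) * z
      + (ecoef a 2 + I * ecoef a 6) * z ^ 2 + (ecoef a 3 + I * ecoef a 7) * z ^ 3 := by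
  have e8 : z ^ 8 = -1 := by
    rw [show z ^ 8 = (z ^ 4) ^ 2 by ring, hz, Complex.I_sq]
  have p : ∀ n, z ^ (n + 8) = - z ^ n := by
    intro n; rw [pow_add, e8]; ring
  have q : ∀ n, z ^ (n + 4) = I * z ^ n := by
    intro n; rw [pow_add, hz]; ring
  have p8 := p 0
  have p9 := p 1
  have p10 := p 2
  have p11 := p 3
  have p12 := p 4
  have p13 := p 5
  have p14 := p 6
  have p15 := p 7
  have q5 := q 1
  have q6 := q 2
  have q7 := q 3
  norm_num at p8 p9 p10 p11 p12 p13 p14 p15 q5 q6 q7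
  simp only [fpoly, Fin.sum_univ_succ, ecoef]
  simp [Fin.succ]
  rw [p8, p9, p10, p11, p12, p13, p14, p15, q5, q6, q7, hz]
  ring_nf
  try rfl

/-- Norm of a quartic form from `z` with `z ^ 4 = I` down to the Gaussian field. -/
lemma norm_form (g0 g1 g2 g3 z : ℂ) (hz : z ^ 4 = I) :
    (g0 + g1 * z + g2 * z ^ 2 + g3 * z ^ 3)
      * (g0 + g1 * (I * z) + g2 * (I * z) ^ 2 + g3 * (I * z) ^ 3)
      * (g0 + g1 * (-z) + g2 * (-z) ^ 2 + g3 * (-z) ^ 3)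
      * (g0 + g1 * (-(I * z)) + g2 * (-(I * z)) ^ 2 + g3 * (-(I * z)) ^ 3)
    = (g0 ^ 2 + I * g2 ^ 2 - 2 * I * g1 * g3) ^ 2
      - I * (2 * g0 * g2 - g1 ^ 2 - I * g3 ^ 2) ^ 2 := by
  have key : ∀ y : ℂ, y ^ 4 = I → (g0 + g1 * y + g2 * y ^ 2 + g3 * y ^ 3)
      * (g0 + g1 * (-y) + g2 * (-y) ^ 2 + g3 * (-y) ^ 3)
      = (g0 ^ 2 + I * g2 ^ 2 - 2 * I * g1 * g3)
        + (2 * g0 * g2 - g1 ^ 2 - I * g3 ^ 2) * y ^ 2 := by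
    intro y hy
    linear_combination (g2 ^ 2 - 2 * g1 * g3 - g3 ^ 2 * y ^ 2) * hy
  have hIz : (I * z) ^ 4 = I := by rw [mul_pow, hz, Complex.I_pow_four, one_mul]
  have h1 := key z hz
  have h2 := key (I * z) hIz
  have h3 : (I * z) ^ 2 = - z ^ 2 := by rw [mul_pow, Complex.I_sq]; ring
  rw [h3] at h2
  set F1 := g0 + g1 * z + g2 * z ^ 2 + g3 * z ^ 3
  set F3 := g0 + g1 * (-z) + g2 * (-z) ^ 2 + g3 * (-z) ^ 3
  rw [← h3] at h2
  set F2 := g0 + g1 * (I * z) + g2 * (I * z) ^ 2 + g3 * (I * z) ^ 3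
  set F4 := g0 + g1 * (-(I * z)) + g2 * (-(I * z)) ^ 2 + g3 * (-(I * z)) ^ 3
  rw [h3] at h2
  rw [show F1 * F2 * F3 * F4 = (F1 * F3) * (F2 * F4) by ring, h1, h2]
  linear_combination (- (2 * g0 * g2 - g1 ^ 2 - I * g3 ^ 2) ^ 2) * hz

lemma odd_sq (p : ℤ) : ∃ k, (2 * p + 1) ^ 2 = 1 + 8 * k := by
  obtain ⟨k, hk⟩ := Int.even_mul_succ_self p
  exact ⟨k, by linear_combination 4 * hk⟩

lemma four_sq (p : ℤ) : ∃ k, (2 * p) ^ 2 = 4 * p + 8 * k := by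
  obtain ⟨k, hk⟩ := Int.even_mul_succ_self p
  exact ⟨k - p, by linear_combination 4 * hk⟩

/-- If `p` is odd and `q` even, the square difference and twice the product modulo 8. -/
lemma odd_even (p q : ℤ) (hp : Odd p) (u d : ℤ) (hq : q = 2 * u + 4 * d) :
    (∃ k, p ^ 2 - q ^ 2 = 1 + 4 * u + 8 * k) ∧ (∃ k, 2 * (p * q) = 4 * u + 8 * k) := by
  obtain ⟨t, rfl⟩ := hp
  obtain ⟨k, hk⟩ := odd_sq t
  obtain ⟨l, hl⟩ := four_sq (u + 2 * d)
  subst hq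
  exact ⟨⟨k - l - u - d, by linear_combination hk - hl⟩, ⟨t * (u + 2 * d) + d, by ring⟩⟩

/-- Either coordinate may be the odd one. -/
lemma core (e0 e1 e2 e3 e4 e5 e6 e7 : ℤ)
    (h02 : Odd (e0 + e4 + e2 + e6)) :
    ∃ P Q k l : ℤ, P = (e0^2 - e4^2 - 2*e2*e6 + 2*(e1*e7 + e5*e3)) ∧
      Q = 2*e0*e4 + e2^2 - e6^2 - 2*(e1*e3 - e5*e7) ∧
      ((Even (e2 + e6) ∧ P^2 - Q^2 = 1 + 4 * (e1*e3 + e5*e7) + 8 * k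
          ∧ 2*(P*Q) = 4 * (e1*e3 + e5*e7) + 8 * l)
      ∨ (Odd (e2 + e6) ∧ P^2 - Q^2 = -1 + 4 * (e1*e7 + e5*e3) + 8 * k
          ∧ 2*(P*Q) = 4 * (e1*e7 + e5*e3) + 8 * l)) := by
  rcases Int.even_or_odd (e2 + e6) with h | h
  · have h4 : Odd (e0 + e4) := by
      rw [show e0 + e4 = (e0 + e4 + e2 + e6) - (e2 + e6) by ring]; exact h02.sub_even h
    obtain ⟨m, hm⟩ := h
    obtain ⟨n, hn⟩ := h4
    obtain rfl : e6 = 2 * m - e2 := by linarith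
    obtain rfl : e4 = 2 * n + 1 - e0 := by linarith
    obtain ⟨r, hr⟩ := Int.even_mul_pred_self e0
    obtain ⟨⟨k, hk⟩, ⟨l, hl⟩⟩ := odd_even
      (e0^2 - (2*n+1-e0)^2 - 2*e2*(2*m-e2) + 2*(e1*e7 + e5*e3))
      (2*e0*(2*n+1-e0) + e2^2 - (2*m-e2)^2 - 2*(e1*e3 - e5*e7))
      ⟨2*(n*e0) + e0 - 2*n^2 - 2*n - 1 - e2*(2*m-e2) + (e1*e7+e5*e3), by ring⟩
      (e1*e3 + e5*e7) (n*e0 - r + m*e2 - m^2 - e1*e3) (by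
        linear_combination (-2) * hr)
    exact ⟨_, _, k, l, rfl, rfl, Or.inl ⟨⟨m, by ring⟩, hk, hl⟩⟩
  · have h4 : Even (e0 + e4) := by
      rw [show e0 + e4 = (e0 + e4 + e2 + e6) - (e2 + e6) by ring]; exact h02.sub_odd h
    obtain ⟨m, hm⟩ := h
    obtain ⟨n, hn⟩ := h4
    obtain rfl : e6 = 2 * m + 1 - e2 := by linarith
    obtain rfl : e4 = 2 * n - e0 := by linarith
    obtain ⟨r, hr⟩ := Int.even_mul_pred_self e2
    obtain ⟨⟨k, hk⟩, ⟨l, hl⟩⟩ := odd_even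
      (2*e0*(2*n-e0) + e2^2 - (2*m+1-e2)^2 - 2*(e1*e3 - e5*e7))
      (e0^2 - (2*n-e0)^2 - 2*e2*(2*m+1-e2) + 2*(e1*e7 + e5*e3))
      ⟨e0*(2*n-e0) + 2*m*e2 + e2 - 2*m^2 - 2*m - 1 - (e1*e3-e5*e7), by ring⟩
      (e1*e7 + e5*e3) (n*e0 - n^2 - m*e2 + r) (by
        linear_combination (2) * hr)
    exact ⟨_, _, -k - (e1*e7 + e5*e3), l, rfl, rfl, Or.inr ⟨⟨m, by ring⟩, by linear_combination -hk,
      by linear_combination hl⟩⟩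

lemma neg_one_pow_even (b : ℤ) (h : Even b) : (-1 : ℤ) ^ b.natAbs = 1 :=
  (Int.natAbs_even.mpr h).neg_one_pow

lemma neg_one_pow_odd (b : ℤ) (h : Odd b) : (-1 : ℤ) ^ b.natAbs = -1 :=
  (Int.natAbs_odd.mpr h).neg_one_pow

lemma odd_of_not_modEq (x y z w : ℤ) (h : ¬ x + y ≡ z + w [ZMOD 2]) : Odd (x + y + z + w) := by
  rw [Int.odd_iff]
  unfold Int.ModEq at h
  omega

theorem alpha1_re_im_mod_eight (a : Fin 16 → ℤ)
    (h02 : ¬ ecoef a 0 + ecoef a 4 ≡ ecoef a 2 + ecoef a 6 [ZMOD 2])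
    (h13 : ¬ ecoef a 1 + ecoef a 5 ≡ ecoef a 3 + ecoef a 7 [ZMOD 2]) :
    (∃ m : ℤ,
      (fpoly a zeta16 * fpoly a (zeta16 ^ 5) * fpoly a (zeta16 ^ 9) * fpoly a (zeta16 ^ 13)).re =
        (((-1) ^ (bcoef a 2).natAbs
          + 2 * (bcoef a 0 * bcoef a 2 + bcoef a 1 * bcoef a 3
            + ccoef a 0 * ccoef a 2 + ccoef a 1 * ccoef a 3) + 8 * m : ℤ) : ℝ)) ∧
    (∃ m : ℤ,
      (fpoly a zeta16 * fpoly a (zeta16 ^ 5) * fpoly a (zeta16 ^ 9) * fpoly a (zeta16 ^ 13)).im =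
        (((-1) ^ (bcoef a 1).natAbs
          + 2 * (bcoef a 0 * bcoef a 2 + bcoef a 1 * bcoef a 3
            + ccoef a 0 * ccoef a 2 + ccoef a 1 * ccoef a 3) + 8 * m : ℤ) : ℝ)) := by
  have hz := zeta16_pow_four
  have h5 : zeta16 ^ 5 = I * zeta16 := by rw [pow_succ, hz]
  have h9 : zeta16 ^ 9 = -zeta16 := by
    rw [show zeta16 ^ 9 = (zeta16 ^ 4) ^ 2 * zeta16 by ring, hz, Complex.I_sq]; ring
  have hz13 : zeta16 ^ 13 = -(I * zeta16) := by
    rw [show zeta16 ^ 13 = (zeta16 ^ 4) ^ 2 * (zeta16 ^ 4 * zeta16) by ring, hz, Complex.I_sq]; ring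
  have hIz : (I * zeta16) ^ 4 = I := by rw [mul_pow, hz, Complex.I_pow_four, one_mul]
  have hN := norm_form (ecoef a 0 + I * ecoef a 4) (ecoef a 1 + I * ecoef a 5)
    (ecoef a 2 + I * ecoef a 6) (ecoef a 3 + I * ecoef a 7) zeta16 hz
  rw [← fpoly_of_pow_four a zeta16 hz, ← fpoly_of_pow_four a (I * zeta16) hIz,
    ← fpoly_of_pow_four a (-zeta16) (by rw [← hz]; ring),
    ← fpoly_of_pow_four a (-(I * zeta16)) ((Even.neg_pow (by decide) _).trans hIz)] at hN
  rw [h5, h9, hz13, hN]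
  have o02 := odd_of_not_modEq _ _ _ _ h02
  have o13 := odd_of_not_modEq _ _ _ _ h13
  have hb2 : bcoef a 2 = ecoef a 2 + ecoef a 6 + 2 * (a 10 + a 14) := by
    simp only [bcoef, ecoef, show (2 : Fin 16) + 8 = 10 from rfl,
      show (2 : Fin 16) + 4 = 6 from rfl, show (2 : Fin 16) + 12 = 14 from rfl,
      show (6 : Fin 16) + 8 = 14 from rfl]
    ring
  have hb1 : bcoef a 1 = ecoef a 1 + ecoef a 5 + 2 * (a 9 + a 13) := by
    simp only [bcoef, ecoef, show (1 : Fin 16) + 8 = 9 from rfl,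
      show (1 : Fin 16) + 4 = 5 from rfl, show (1 : Fin 16) + 12 = 13 from rfl,
      show (5 : Fin 16) + 8 = 13 from rfl]
    ring
  have hT : ∃ t, bcoef a 0 * bcoef a 2 + bcoef a 1 * bcoef a 3
            + ccoef a 0 * ccoef a 2 + ccoef a 1 * ccoef a 3
      = 2 * (ecoef a 0 * ecoef a 2 + ecoef a 4 * ecoef a 6 + ecoef a 1 * ecoef a 3
        + ecoef a 5 * ecoef a 7) + 4 * t := by
    refine ⟨ecoef a 0 * a 10 + a 8 * ecoef a 2 + 2 * a 8 * a 10
      + ecoef a 4 * a 14 + a 12 * ecoef a 6 + 2 * a 12 * a 14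
      + ecoef a 1 * a 11 + a 9 * ecoef a 3 + 2 * a 9 * a 11
      + ecoef a 5 * a 15 + a 13 * ecoef a 7 + 2 * a 13 * a 15, ?_⟩
    simp only [bcoef, ccoef, ecoef, show (0 : Fin 16) + 8 = 8 from rfl,
      show (0 : Fin 16) + 4 = 4 from rfl, show (0 : Fin 16) + 12 = 12 from rfl,
      show (1 : Fin 16) + 8 = 9 from rfl,
      show (1 : Fin 16) + 4 = 5 from rfl, show (1 : Fin 16) + 12 = 13 from rfl,
      show (2 : Fin 16) + 8 = 10 from rfl,
      show (2 : Fin 16) + 4 = 6 from rfl, show (2 : Fin 16) + 12 = 14 from rfl,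
      show (3 : Fin 16) + 8 = 11 from rfl,
      show (3 : Fin 16) + 4 = 7 from rfl, show (3 : Fin 16) + 12 = 15 from rfl,
      show (4 : Fin 16) + 8 = 12 from rfl, show (5 : Fin 16) + 8 = 13 from rfl,
      show (6 : Fin 16) + 8 = 14 from rfl, show (7 : Fin 16) + 8 = 15 from rfl]
    ring
  obtain ⟨t, ht⟩ := hT
  rw [ht]
  have s2e : Even (ecoef a 2 + ecoef a 6) → (-1 : ℤ) ^ (bcoef a 2).natAbs = 1 := fun h =>
    neg_one_pow_even _ (by rw [hb2]; exact h.add (even_two_mul _))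
  have s2o : Odd (ecoef a 2 + ecoef a 6) → (-1 : ℤ) ^ (bcoef a 2).natAbs = -1 := fun h =>
    neg_one_pow_odd _ (by rw [hb2]; exact h.add_even (even_two_mul _))
  have s1e : Even (ecoef a 1 + ecoef a 5) → (-1 : ℤ) ^ (bcoef a 1).natAbs = 1 := fun h =>
    neg_one_pow_even _ (by rw [hb1]; exact h.add (even_two_mul _))
  have s1o : Odd (ecoef a 1 + ecoef a 5) → (-1 : ℤ) ^ (bcoef a 1).natAbs = -1 := fun h =>
    neg_one_pow_odd _ (by rw [hb1]; exact h.add_even (even_two_mul _))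
  generalize (-1 : ℤ) ^ (bcoef a 2).natAbs = σ2 at *
  generalize (-1 : ℤ) ^ (bcoef a 1).natAbs = σ1 at *
  clear hN ht hb1 hb2 h02 h13
  generalize ecoef a 0 = e0 at *
  generalize ecoef a 1 = e1 at *
  generalize ecoef a 2 = e2 at *
  generalize ecoef a 3 = e3 at *
  generalize ecoef a 4 = e4 at *
  generalize ecoef a 5 = e5 at *
  generalize ecoef a 6 = e6 at *
  generalize ecoef a 7 = e7 at *
  obtain ⟨P, Q, k, l, hP, hQ, hPQ⟩ := core e0 e1 e2 e3 e4 e5 e6 e7 o02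
  -- the second coordinate is the first one for a shifted tuple
  obtain ⟨R, S, kk, ll, hR, hS, hRS⟩ := core (-e7) e0 e1 e2 e3 e4 e5 e6
    (by rw [show -e7 + e3 + e1 + e5 = (e1 + e5 + e3 + e7) - 2 * e7 by ring]
        exact o13.sub_even (even_two_mul _))
  -- `R + I S = - I B`
  have hN2 : ((e0 + I * e4 : ℂ) ^ 2 + I * (e2 + I * e6) ^ 2 - 2 * I * (e1 + I * e5) * (e3 + I * e7)) ^ 2
      - I * (2 * (e0 + I * e4) * (e2 + I * e6) - (e1 + I * e5) ^ 2 - I * (e3 + I * e7) ^ 2) ^ 2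
      = ((P^2 - Q^2 - 2 * (R * S) : ℤ) : ℂ) + ((2 * (P * Q) + (R^2 - S^2) : ℤ) : ℂ) * I := by
    have hA : (e0 + I * e4 : ℂ) ^ 2 + I * (e2 + I * e6) ^ 2 - 2 * I * (e1 + I * e5) * (e3 + I * e7)
        = P + Q * I := by
      rw [hP, hQ]; push_cast
      linear_combination (e4^2 + 2*e2*e6 + I * e6^2 - 2*(e1*e7+e5*e3) - 2 * I * e5*e7 : ℂ) * Complex.I_sq
    have hB : (2 * (e0 + I * e4) * (e2 + I * e6) - (e1 + I * e5) ^ 2 - I * (e3 + I * e7) ^ 2 : ℂ)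
        = -(S - R * I) := by
      rw [hR, hS]; push_cast
      linear_combination (2 * e4 * e6 - e5^2 - 2*e3*e7 - I*e7^2 : ℂ) * Complex.I_sq
    rw [hA, hB]; push_cast
    linear_combination (Q^2 + 2 * S * R - R^2 * I : ℂ) * Complex.I_sq
  rw [hN2]
  have hre : ∀ x y : ℤ, ((x : ℂ) + (y : ℂ) * I).re = (x : ℝ) := by intro x y; simp
  have him : ∀ x y : ℤ, ((x : ℂ) + (y : ℂ) * I).im = (y : ℝ) := by intro x y; simp
  rw [hre, him]
  simp only [Int.cast_inj]
  clear hN2 hre him hP hQ hR hS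
  have hev : ∀ x y z w : ℤ, Odd (x + y + z + w) → Even ((x + y) * (z + w)) := by
    intro x y z w h
    rw [Int.even_mul]
    by_contra! hc
    obtain ⟨h1, h2⟩ := hc
    rw [Int.not_even_iff_odd] at h1 h2
    have h3 := h1.add_odd h2
    rw [← add_assoc] at h3
    exact (Int.not_even_iff_odd.mpr h) h3
  obtain ⟨x, hx⟩ := hev _ _ _ _ o02
  obtain ⟨y, hy⟩ := hev _ _ _ _ o13
  obtain ⟨X, hX⟩ : ∃ X, X = e0 * e2 + e4 * e6 := ⟨_, rfl⟩
  obtain ⟨Y, hY⟩ : ∃ Y, Y = e1 * e3 + e5 * e7 := ⟨_, rfl⟩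
  have hXX : e0 * e6 + e4 * e2 = 2 * x - X := by linear_combination hx + hX
  have hYY : e1 * e7 + e5 * e3 = 2 * y - Y := by linear_combination hy + hY
  rw [show e0 * e2 + e4 * e6 + e1 * e3 + e5 * e7 = X + Y by rw [hX, hY]; ring]
  rw [hXX, ← hX] at hRS
  rw [hYY, ← hY] at hPQ
  suffices h : (8 : ℤ) ∣ (P^2 - Q^2 - 2 * (R * S)) - (σ2 + 2 * (2 * (X + Y) + 4 * t)) ∧
      (8 : ℤ) ∣ (2 * (P * Q) + (R^2 - S^2)) - (σ1 + 2 * (2 * (X + Y) + 4 * t)) by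
    obtain ⟨⟨m, hm⟩, ⟨n, hn⟩⟩ := h
    exact ⟨⟨m, by linarith⟩, ⟨n, by linarith⟩⟩
  rcases hPQ with ⟨h1, h2, h3⟩ | ⟨h1, h2, h3⟩ <;>
    rcases hRS with ⟨h4, h5, h6⟩ | ⟨h4, h5, h6⟩ <;>
    [rw [s2e h1, s1e h4]; rw [s2e h1, s1o h4]; rw [s2o h1, s1e h4]; rw [s2o h1, s1o h4]] <;>
    rw [h2, h3, h5, h6] <;> constructor <;> omega
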